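/- Fix μ ∈ (1,2) and α ∈ (0,1) with μ > 1 + α. Define f : ℝ → ℝ by f(z) = ((μ−1)/(2μ)) z² if |z| ≤ 1, and f(z) = |z| − (1/(μ(2−μ)))|z|^{2−μ} + (μ−1)/(2(2−μ)) if |z| > 1, and the weight w(x) := 1 + |x|^α. Set M₀ := ∫_{−1}^1 (μ(1 − 1/(1+|t|^α)))^{1/(1−μ)} dt, which is finite. Then for every M > M₀, the infimum of the functional 𝒥[v] := ∫_{−1}^1 f(v(t)) w(t) dt over all v ∈ L¹((−1,1); ℝ) with ∫_{−1}^1 v(t) dt = M is not attained; that is, the variational problem ∫_{−1}^1 f(u'(x)) w(x) dx over u ∈ W^{1,1}(−1,1) with u(−1) = 0 and u(1) = M has no minimizer. -/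

import Mathlib

/-!
The integrand is `C¹` and strictly convex, with derivative increasing to the recession slope `1`,
and the weight attains its infimum `1` only at the origin. The Euler–Lagrange equation with
multiplier `1`, `f'(g(t)) (1 + |t|^α) = 1`, is solved by the profile `g` whose integral is the
threshold `M₀`. By strict convexity `𝒥[v] ≥ 𝒥[g] + (M - M₀)` for every competitor `v`, with
equality only if `v = g` almost everywhere. Conversely, putting the excess mass `M - M₀` on
shrinking neighbourhoods of the origin shows that the infimum is exactly `𝒥[g] + (M - M₀)`. A
minimizer would therefore coincide with `g`, whose integral is `M₀` and not `M`.
-/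

open MeasureTheory

/-- The model integrand of the one-dimensional counterexample. -/
noncomputable def modelF (μ : ℝ) (z : ℝ) : ℝ :=
  if |z| ≤ 1 then ((μ - 1) / (2 * μ)) * z ^ 2
  else |z| - (1 / (μ * (2 - μ))) * |z| ^ (2 - μ) + (μ - 1) / (2 * (2 - μ))

open Set Filter Topology
open scoped NNReal

section WeightedEnergy

variable {X : Type*} [MeasurableSpace X] {ν : Measure X}

/-- The functional `𝒥[v] = ∫ f(v) w dν` with integrand `f` and weight `w`. -/
noncomputable def weightedEnergy (ν : Measure X) (f : ℝ → ℝ) (w v : X → ℝ) : ℝ :=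
  ∫ x, f (v x) * w x ∂ν

/-- `v` minimizes the weighted energy among the integrable functions of total mass `M`. -/
def IsEnergyMinimizer (ν : Measure X) (f : ℝ → ℝ) (w : X → ℝ) (M : ℝ) (v : X → ℝ) : Prop :=
  Integrable v ν ∧ ∫ x, v x ∂ν = M ∧
    ∀ v' : X → ℝ, Integrable v' ν → ∫ x, v' x ∂ν = M →
      weightedEnergy ν f w v ≤ weightedEnergy ν f w v'

lemma ae_eq_of_calibration {F : X → ℝ → ℝ} {g v : X → ℝ} {s : ℝ}
    (hg : Integrable g ν) (hv : Integrable v ν)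
    (hFg : Integrable (fun x => F x (g x)) ν) (hFv : Integrable (fun x => F x (v x)) ν)
    (hcal : ∀ᵐ x ∂ν, ∀ z, z ≠ g x → F x (g x) + s * (z - g x) < F x z)
    (hle : ∫ x, F x (v x) ∂ν ≤ ∫ x, F x (g x) ∂ν + s * (∫ x, v x ∂ν - ∫ x, g x ∂ν)) :
    v =ᵐ[ν] g := by
  have hlin : Integrable (fun x => s * (v x - g x)) ν := (hv.sub hg).const_mul s
  have hAff : Integrable (fun x => F x (g x) + s * (v x - g x)) ν := hFg.add hlin
  have hAff_le : (fun x => F x (g x) + s * (v x - g x)) ≤ᵐ[ν] fun x => F x (v x) := by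
    filter_upwards [hcal] with x hx
    rcases eq_or_ne (v x) (g x) with h | h
    · simp [h]
    · exact (hx _ h).le
  have hAff_integral : ∫ x, (F x (g x) + s * (v x - g x)) ∂ν =
      ∫ x, F x (g x) ∂ν + s * (∫ x, v x ∂ν - ∫ x, g x ∂ν) := by
    rw [integral_add hFg hlin, integral_const_mul, integral_sub hv hg]
  have hAff_eq : (fun x => F x (g x) + s * (v x - g x)) =ᵐ[ν] fun x => F x (v x) :=
    (integral_eq_iff_of_ae_le hAff hFv hAff_le).1
      ((integral_mono_ae hAff hFv hAff_le).antisymm (hle.trans_eq hAff_integral.symm))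
  filter_upwards [hcal, hAff_eq] with x hx heq
  by_contra hne
  exact (hx _ hne).ne heq

lemma integrable_comp_mul_of_lipschitzWith [IsFiniteMeasure ν] {K : ℝ≥0} {f : ℝ → ℝ}
    {w v : X → ℝ} {W : ℝ} (hf : LipschitzWith K f) (hwm : AEStronglyMeasurable w ν)
    (hw : ∀ᵐ x ∂ν, ‖w x‖ ≤ W) (hv : Integrable v ν) :
    Integrable (fun x => f (v x) * w x) ν := by
  have hfv : Integrable (fun x => f (v x)) ν := by
    refine ((hv.norm.const_mul (K : ℝ)).add (integrable_const ‖f 0‖)).mono'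
      (hf.continuous.comp_aestronglyMeasurable hv.aestronglyMeasurable) (ae_of_all _ fun x => ?_)
    calc ‖f (v x)‖ ≤ ‖f (v x) - f 0‖ + ‖f 0‖ := norm_le_norm_sub_add _ _
      _ ≤ K * ‖v x‖ + ‖f 0‖ := by
        gcongr
        simpa using hf.norm_sub_le (v x) 0
  exact hfv.mul_bdd hwm hw

lemma weightedEnergy_add_indicator_le [IsFiniteMeasure ν] {K : ℝ≥0} {f : ℝ → ℝ}
    {w g : X → ℝ} {A : Set X} {W m c : ℝ} (hf : LipschitzWith K f)
    (hwm : AEStronglyMeasurable w ν) (hw0 : ∀ᵐ x ∂ν, 0 ≤ w x) (hw : ∀ᵐ x ∂ν, ‖w x‖ ≤ W)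
    (hg : Integrable g ν) (hA : MeasurableSet A) (hwA : ∀ x ∈ A, w x ≤ m) (hc : 0 ≤ c) :
    weightedEnergy ν f w (fun x => g x + A.indicator (fun _ => c) x) ≤
      weightedEnergy ν f w g + K * m * (ν.real A * c) := by
  have hbump (k : ℝ) : Integrable (A.indicator fun _ => k) ν := (integrable_const k).indicator hA
  have hEg := integrable_comp_mul_of_lipschitzWith hf hwm hw hg
  have hEbump := integrable_comp_mul_of_lipschitzWith hf hwm hw (hg.add (hbump c))
  calc weightedEnergy ν f w (fun x => g x + A.indicator (fun _ => c) x)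
    _ ≤ ∫ x, (f (g x) * w x + A.indicator (fun _ => K * m * c) x) ∂ν := by
      refine integral_mono_ae hEbump (hEg.add (hbump _)) ?_
      filter_upwards [hw0] with x hx
      by_cases hxA : x ∈ A
      · have hlip : f (g x + c) ≤ f (g x) + K * c := by
          have := (le_abs_self _).trans (hf.norm_sub_le (g x + c) (g x))
          rw [add_sub_cancel_left, Real.norm_of_nonneg hc] at this
          linarith
        simp only [indicator_of_mem hxA]
        calc f (g x + c) * w x ≤ (f (g x) + K * c) * w x := by gcongr
          _ = f (g x) * w x + K * w x * c := by ring
          _ ≤ f (g x) * w x + K * m * c := by gcongr; exact hwA x hxA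
      · simp [indicator_of_notMem hxA]
    _ = weightedEnergy ν f w g + K * m * (ν.real A * c) := by
      rw [integral_add hEg (hbump _), integral_indicator_const _ hA, smul_eq_mul, weightedEnergy]
      ring

lemma exists_weightedEnergy_le_add [IsFiniteMeasure ν] {K : ℝ≥0} {f : ℝ → ℝ}
    {w g : X → ℝ} {W m M : ℝ} (hf : LipschitzWith K f) (hwm : Measurable w)
    (hw0 : ∀ᵐ x ∂ν, 0 ≤ w x) (hw : ∀ᵐ x ∂ν, ‖w x‖ ≤ W) (hg : Integrable g ν) (hM : ∫ x, g x ∂ν ≤ M)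
    (hm : ν {x | w x < m} ≠ 0) :
    ∃ v : X → ℝ, Integrable v ν ∧ ∫ x, v x ∂ν = M ∧
      weightedEnergy ν f w v ≤ weightedEnergy ν f w g + K * m * (M - ∫ x, g x ∂ν) := by
  set A : Set X := {x | w x < m}
  have hA : MeasurableSet A := measurableSet_lt hwm measurable_const
  have hA_pos : 0 < ν.real A := ENNReal.toReal_pos hm (measure_ne_top ν A)
  set c : ℝ := (M - ∫ x, g x ∂ν) / ν.real A
  have hc : 0 ≤ c := div_nonneg (sub_nonneg.2 hM) hA_pos.le
  have hmass : ν.real A * c = M - ∫ x, g x ∂ν := mul_div_cancel₀ _ hA_pos.ne'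
  have hbump : Integrable (A.indicator fun _ => c) ν := (integrable_const c).indicator hA
  refine ⟨fun x => g x + A.indicator (fun _ => c) x, hg.add hbump, ?_, ?_⟩
  · rw [integral_add hg hbump, integral_indicator_const _ hA, smul_eq_mul, hmass]
    ring
  · rw [← hmass]
    exact weightedEnergy_add_indicator_le hf hwm.aestronglyMeasurable hw0 hw hg hA
      (fun _ hx => le_of_lt hx) hc

lemma IsEnergyMinimizer.weightedEnergy_le [IsFiniteMeasure ν] {K : ℝ≥0} {f : ℝ → ℝ}
    {w g v : X → ℝ} {W m M : ℝ} (hv : IsEnergyMinimizer ν f w M v) (hf : LipschitzWith K f)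
    (hwm : Measurable w) (hw0 : ∀ᵐ x ∂ν, 0 ≤ w x) (hw : ∀ᵐ x ∂ν, ‖w x‖ ≤ W)
    (hm : ∀ ε > 0, ν {x | w x < m + ε} ≠ 0) (hg : Integrable g ν) (hM : ∫ x, g x ∂ν ≤ M) :
    weightedEnergy ν f w v ≤ weightedEnergy ν f w g + K * m * (M - ∫ x, g x ∂ν) := by
  have hε : ∀ ε > 0, weightedEnergy ν f w v ≤
      weightedEnergy ν f w g + K * (m + ε) * (M - ∫ x, g x ∂ν) := by
    intro ε hε
    obtain ⟨v', hv', hv'M, hle⟩ := exists_weightedEnergy_le_add hf hwm hw0 hw hg hM (hm ε hε)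
    exact (hv.2.2 v' hv' hv'M).trans hle
  have hlim : Tendsto (fun ε => weightedEnergy ν f w g + K * (m + ε) * (M - ∫ x, g x ∂ν))
      (𝓝[>] 0) (𝓝 (weightedEnergy ν f w g + K * m * (M - ∫ x, g x ∂ν))) :=
    tendsto_nhdsWithin_of_tendsto_nhds <| Continuous.tendsto' (by fun_prop) _ _ (by simp)
  exact ge_of_tendsto hlim (eventually_mem_nhdsWithin.mono hε)

theorem not_exists_isEnergyMinimizer_of_calibration [IsFiniteMeasure ν] {K : ℝ≥0} {f : ℝ → ℝ}
    {w g : X → ℝ} {W m M : ℝ} (hf : LipschitzWith K f) (hwm : Measurable w)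
    (hw0 : ∀ᵐ x ∂ν, 0 ≤ w x) (hw : ∀ᵐ x ∂ν, ‖w x‖ ≤ W)
    (hm : ∀ ε > 0, ν {x | w x < m + ε} ≠ 0) (hg : Integrable g ν)
    (hcal : ∀ᵐ x ∂ν, ∀ z, z ≠ g x → f (g x) * w x + K * m * (z - g x) < f z * w x)
    (hM : ∫ x, g x ∂ν < M) :
    ¬ ∃ v, IsEnergyMinimizer ν f w M v := by
  rintro ⟨v, hv⟩
  have hE {u : X → ℝ} (hu : Integrable u ν) : Integrable (fun x => f (u x) * w x) ν :=
    integrable_comp_mul_of_lipschitzWith hf hwm.aestronglyMeasurable hw hu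
  have hvg : v =ᵐ[ν] g := by
    refine ae_eq_of_calibration (F := fun x z => f z * w x) hg hv.1 (hE hg) (hE hv.1) hcal ?_
    rw [hv.2.1]
    exact hv.weightedEnergy_le hf hwm hw0 hw hm hg hM.le
  exact hM.ne ((integral_congr_ae hvg).symm.trans hv.2.1)

end WeightedEnergy

lemma add_mul_sub_lt_of_strictConvexOn_of_hasDerivAt {s : Set ℝ} {f : ℝ → ℝ} {f' a z : ℝ}
    (hf : StrictConvexOn ℝ s f) (ha : a ∈ s) (hz : z ∈ s) (hf' : HasDerivAt f f' a)
    (hza : z ≠ a) : f a + f' * (z - a) < f z := by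
  rcases hza.lt_or_gt with h | h
  · have := hf.slope_lt_of_hasDerivAt hz ha h hf'
    rw [slope_def_field, div_lt_iff₀ (sub_pos.2 h)] at this
    linarith
  · have := hf.lt_slope_of_hasDerivAt ha hz h hf'
    rw [slope_def_field, lt_div_iff₀ (sub_pos.2 h)] at this
    linarith

section ModelIntegrand

variable {μ : ℝ}

/-- The derivative of `modelF μ`, for `μ ∉ {0, 2}`. -/
noncomputable def modelSlope (μ z : ℝ) : ℝ :=
  if |z| ≤ 1 then (μ - 1) / μ * z else Real.sign z * (1 - |z| ^ (1 - μ) / μ)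

/-- The inverse of `modelSlope μ` on its outer branch: the point `z ≥ 1` at which the slope is `p`,
for `(μ - 1) / μ ≤ p < 1`. With `p = 1 / (1 + |t| ^ α)` this is the profile `g` whose integral is
the threshold `M₀`. -/
noncomputable def modelSlopeInv (μ p : ℝ) : ℝ :=
  (μ * (1 - p)) ^ (1 / (1 - μ))

lemma modelF_neg (μ z : ℝ) : modelF μ (-z) = modelF μ z := by
  simp only [modelF, abs_neg, even_two.neg_pow]

lemma modelF_of_one_le (hμ0 : μ ≠ 0) (hμ2 : μ ≠ 2) {z : ℝ} (hz : 1 ≤ z) :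
    modelF μ z = z - 1 / (μ * (2 - μ)) * z ^ (2 - μ) + (μ - 1) / (2 * (2 - μ)) := by
  rw [modelF, abs_of_pos (by linarith)]
  split_ifs with h
  · obtain rfl : z = 1 := le_antisymm h hz
    have : 2 - μ ≠ 0 := sub_ne_zero.2 hμ2.symm
    rw [Real.one_rpow]
    field_simp
    ring
  · rfl

lemma modelSlope_neg (μ z : ℝ) : modelSlope μ (-z) = -modelSlope μ z := by
  simp only [modelSlope, abs_neg, Real.sign_neg, mul_neg, neg_mul, neg_ite]

lemma modelSlope_of_one_le (hμ0 : μ ≠ 0) {z : ℝ} (hz : 1 ≤ z) :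
    modelSlope μ z = 1 - z ^ (1 - μ) / μ := by
  rw [modelSlope, abs_of_pos (by linarith), Real.sign_of_pos (by linarith), one_mul]
  split_ifs with h
  · obtain rfl : z = 1 := le_antisymm h hz
    rw [Real.one_rpow]
    field_simp
  · rfl

lemma hasDerivWithinAt_modelF_Icc (μ : ℝ) {z : ℝ} (hz : z ∈ Icc (-1) 1) :
    HasDerivWithinAt (modelF μ) (modelSlope μ z) (Icc (-1) 1) z := by
  have hquad : HasDerivAt (fun y => (μ - 1) / (2 * μ) * y ^ 2) (modelSlope μ z) z := by
    rw [modelSlope, if_pos (abs_le.2 hz)]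
    refine ((hasDerivAt_pow 2 z).const_mul ((μ - 1) / (2 * μ))).congr_deriv ?_
    field_simp
    norm_num
  exact hquad.hasDerivWithinAt.congr_of_mem (fun y hy => if_pos (abs_le.2 hy)) hz

lemma hasDerivWithinAt_modelF_Ici (hμ0 : μ ≠ 0) (hμ2 : μ ≠ 2) {z : ℝ} (hz : z ∈ Ici 1) :
    HasDerivWithinAt (modelF μ) (modelSlope μ z) (Ici 1) z := by
  have htail : HasDerivAt
      (fun y => y - 1 / (μ * (2 - μ)) * y ^ (2 - μ) + (μ - 1) / (2 * (2 - μ)))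
      (modelSlope μ z) z := by
    have hz0 : z ≠ 0 := (zero_lt_one.trans_le hz).ne'
    have hμ2' : 2 - μ ≠ 0 := sub_ne_zero.2 hμ2.symm
    rw [modelSlope_of_one_le hμ0 hz]
    refine (((hasDerivAt_id z).sub ((Real.hasDerivAt_rpow_const (p := 2 - μ)
      (Or.inl hz0)).const_mul _)).add_const _).congr_deriv ?_
    rw [show 2 - μ - 1 = 1 - μ by ring]
    field_simp
  exact htail.hasDerivWithinAt.congr_of_mem (fun y hy => modelF_of_one_le hμ0 hμ2 hy) hz

lemma hasDerivAt_modelF (hμ0 : μ ≠ 0) (hμ2 : μ ≠ 2) (z : ℝ) :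
    HasDerivAt (modelF μ) (modelSlope μ z) z := by
  wlog hz : 0 ≤ z generalizing z
  · have := (this (-z) (by linarith)).comp z (hasDerivAt_neg z)
    simpa only [Function.comp_def, modelF_neg, modelSlope_neg, neg_mul_neg, mul_one] using this
  rcases lt_trichotomy z 1 with h | rfl | h
  · exact (hasDerivWithinAt_modelF_Icc μ ⟨by linarith, h.le⟩).hasDerivAt
      (Icc_mem_nhds (by linarith) h)
  · refine ((hasDerivWithinAt_modelF_Icc μ (by simp)).union
      (hasDerivWithinAt_modelF_Ici hμ0 hμ2 self_mem_Ici)).hasDerivAt ?_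
    rw [Icc_union_Ici_eq_Ici (by norm_num)]
    exact Ici_mem_nhds (by norm_num)
  · exact (hasDerivWithinAt_modelF_Ici hμ0 hμ2 h.le).hasDerivAt (Ici_mem_nhds h)

lemma strictMono_modelSlope (hμ : 1 < μ) : StrictMono (modelSlope μ) := by
  have hμ0 : 0 < μ := by linarith
  have hinner : StrictMonoOn (modelSlope μ) (Icc 0 1) := by
    intro y hy z hz hyz
    rw [modelSlope, modelSlope, if_pos (abs_le.2 ⟨by linarith [hy.1], hy.2⟩),
      if_pos (abs_le.2 ⟨by linarith [hz.1], hz.2⟩)]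
    exact mul_lt_mul_of_pos_left hyz (div_pos (by linarith) hμ0)
  have houter : StrictMonoOn (modelSlope μ) (Ici 1) := by
    intro y hy z hz hyz
    rw [modelSlope_of_one_le hμ0.ne' hy, modelSlope_of_one_le hμ0.ne' hz]
    have hpow : z ^ (1 - μ) < y ^ (1 - μ) :=
      Real.rpow_lt_rpow_of_neg (zero_lt_one.trans_le hy) hyz (by linarith)
    gcongr
  refine strictMono_of_odd_strictMonoOn_nonneg (modelSlope_neg μ) ?_
  rw [← Icc_union_Ici_eq_Ici zero_le_one]
  exact hinner.union houter (isGreatest_Icc zero_le_one) isLeast_Ici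

lemma abs_modelSlope_lt_one (hμ : 1 < μ) (z : ℝ) : |modelSlope μ z| < 1 := by
  have hlt (y : ℝ) : modelSlope μ y < 1 := by
    have hy : 1 ≤ max y 1 := le_max_right y 1
    calc modelSlope μ y ≤ modelSlope μ (max y 1) :=
          (strictMono_modelSlope hμ).monotone (le_max_left y 1)
      _ = 1 - max y 1 ^ (1 - μ) / μ := modelSlope_of_one_le (by linarith) hy
      _ < 1 := sub_lt_self 1 (by positivity)
  have hneg := hlt (-z)
  rw [modelSlope_neg] at hneg
  exact abs_lt.2 ⟨by linarith, hlt z⟩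

lemma lipschitzWith_modelF (hμ : 1 < μ) (hμ2 : μ ≠ 2) : LipschitzWith 1 (modelF μ) := by
  have hderiv := hasDerivAt_modelF (by linarith : μ ≠ 0) hμ2
  refine lipschitzWith_of_nnnorm_deriv_le (fun z => (hderiv z).differentiableAt) fun z => ?_
  rw [(hderiv z).deriv]
  exact (abs_modelSlope_lt_one hμ z).le

lemma strictConvexOn_modelF (hμ : 1 < μ) (hμ2 : μ ≠ 2) : StrictConvexOn ℝ univ (modelF μ) := by
  refine StrictMono.strictConvexOn_univ_of_deriv (lipschitzWith_modelF hμ hμ2).continuous ?_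
  rw [funext fun z => (hasDerivAt_modelF (by linarith) hμ2 z).deriv]
  exact strictMono_modelSlope hμ

lemma one_le_modelSlopeInv {p : ℝ} (hμ : 1 < μ) (hp : (μ - 1) / μ ≤ p) (hp1 : p < 1) :
    1 ≤ modelSlopeInv μ p := by
  have hbase_pos : 0 < μ * (1 - p) := mul_pos (by linarith) (by linarith)
  have hbase_le : μ * (1 - p) ≤ 1 := by
    rw [div_le_iff₀ (by linarith)] at hp
    linarith
  exact Real.one_le_rpow_of_pos_of_le_one_of_nonpos hbase_pos hbase_le
    (one_div_nonpos.2 (by linarith))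

lemma modelSlope_modelSlopeInv {p : ℝ} (hμ : 1 < μ) (hp : (μ - 1) / μ ≤ p) (hp1 : p < 1) :
    modelSlope μ (modelSlopeInv μ p) = p := by
  have hμ0 : μ ≠ 0 := by linarith
  have hbase : 0 ≤ μ * (1 - p) := mul_nonneg (by linarith) (by linarith)
  rw [modelSlope_of_one_le hμ0 (one_le_modelSlopeInv hμ hp hp1), modelSlopeInv,
    ← Real.rpow_mul hbase, one_div_mul_cancel (by linarith), Real.rpow_one,
    mul_div_cancel_left₀ _ hμ0, sub_sub_cancel]

lemma modelF_mul_add_sub_lt {w z : ℝ} (hμ : 1 < μ) (hμ2 : μ ≠ 2) (hw : 1 < w)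
    (hwμ : w ≤ μ / (μ - 1)) (hz : z ≠ modelSlopeInv μ (1 / w)) :
    modelF μ (modelSlopeInv μ (1 / w)) * w + (z - modelSlopeInv μ (1 / w)) < modelF μ z * w := by
  have hw0 : 0 < w := by linarith
  have hp : (μ - 1) / μ ≤ 1 / w := by
    rw [← one_div_div μ (μ - 1)]
    exact one_div_le_one_div_of_le hw0 hwμ
  have hp1 : 1 / w < 1 := (div_lt_one hw0).2 hw
  have htangent := add_mul_sub_lt_of_strictConvexOn_of_hasDerivAt
    (strictConvexOn_modelF hμ hμ2) (mem_univ _) (mem_univ z)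
    (hasDerivAt_modelF (by linarith) hμ2 _) hz
  rw [modelSlope_modelSlopeInv hμ hp hp1] at htangent
  set a := modelSlopeInv μ (1 / w)
  calc modelF μ a * w + (z - a) = (modelF μ a + 1 / w * (z - a)) * w := by field_simp
    _ < modelF μ z * w := mul_lt_mul_of_pos_right htangent hw0

lemma modelSlopeInv_one_div_one_add_le {s : ℝ} (hμ : 1 < μ) (hs : 0 < s) (hs1 : s ≤ 1) :
    modelSlopeInv μ (1 / (1 + s)) ≤ (μ / 2) ^ (1 / (1 - μ)) * s ^ (1 / (1 - μ)) := by
  have hbase : μ / 2 * s ≤ μ * (1 - 1 / (1 + s)) :=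
    calc μ / 2 * s = μ * (s / 2) := by ring
      _ ≤ μ * (s / (1 + s)) := by gcongr; linarith
      _ = μ * (1 - 1 / (1 + s)) := by field_simp; ring
  rw [modelSlopeInv, ← Real.mul_rpow (by linarith) hs.le]
  exact Real.rpow_le_rpow_of_nonpos (by positivity) hbase (one_div_nonpos.2 (by linarith))

end ModelIntegrand

lemma integrableOn_ball_norm_rpow {E : Type*} [NormedAddCommGroup E] [NormedSpace ℝ E]
    [FiniteDimensional ℝ E] [Nontrivial E] [MeasurableSpace E] [BorelSpace E]
    (ν : Measure E) [ν.IsAddHaarMeasure] {q : ℝ} (hq : -(Module.finrank ℝ E : ℝ) < q) (r : ℝ) :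
    IntegrableOn (fun x : E => ‖x‖ ^ q) (Metric.ball 0 r) ν := by
  rw [integrableOn_fun_norm_addHaar ν (f := fun y => y ^ q)]
  have hpow : (Ioo 0 r).EqOn (fun y => y ^ ((Module.finrank ℝ E - 1 : ℝ) + q))
      fun y => y ^ (Module.finrank ℝ E - 1) • y ^ q := by
    intro y hy
    have hdim : 1 ≤ Module.finrank ℝ E := Module.finrank_pos
    simp only [smul_eq_mul]
    rw [Real.rpow_add hy.1, ← Real.rpow_natCast, Nat.cast_sub hdim, Nat.cast_one]
  refine IntegrableOn.congr_fun ?_ hpow measurableSet_Ioo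
  rcases le_or_gt r 0 with hr | hr
  · simp only [Ioo_eq_empty hr.not_gt, integrableOn_empty]
  · exact (intervalIntegral.integrableOn_Ioo_rpow_iff hr).2 (by linarith)

lemma ae_abs_rpow_mem_Ioc {α : ℝ} (hα : 0 ≤ α) :
    ∀ᵐ t ∂volume.restrict (Ioo (-1 : ℝ) 1), |t| ^ α ∈ Ioc 0 1 := by
  filter_upwards [ae_restrict_mem measurableSet_Ioo, ae_restrict_of_ae (Measure.ae_ne volume 0)]
    with t ht ht0
  exact ⟨Real.rpow_pos_of_pos (abs_pos.2 ht0) α,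
    Real.rpow_le_one (abs_nonneg t) (abs_le.2 ⟨ht.1.le, ht.2.le⟩) hα⟩

lemma integrableOn_modelSlopeInv_one_div_one_add_abs_rpow {μ α : ℝ} (hα : 0 ≤ α)
    (hμα : 1 + α < μ) :
    IntegrableOn (fun t : ℝ => modelSlopeInv μ (1 / (1 + |t| ^ α))) (Ioo (-1) 1) := by
  have hexp : -1 < α * (1 / (1 - μ)) := by
    rw [mul_one_div, lt_div_iff_of_neg (by linarith)]
    linarith
  have hpow : IntegrableOn (fun t : ℝ => |t| ^ (α * (1 / (1 - μ)))) (Ioo (-1) 1) := by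
    simpa [Real.ball_eq_Ioo] using
      integrableOn_ball_norm_rpow (E := ℝ) volume (by simpa using hexp) 1
  refine (hpow.const_mul ((μ / 2) ^ (1 / (1 - μ)))).mono' ?_ ?_
  · unfold modelSlopeInv
    exact Measurable.aestronglyMeasurable (by fun_prop)
  · filter_upwards [ae_abs_rpow_mem_Ioc hα] with t ht
    have hnonneg : 0 ≤ modelSlopeInv μ (1 / (1 + |t| ^ α)) := by
      refine Real.rpow_nonneg (mul_nonneg (by linarith) (sub_nonneg.2 ?_)) _
      exact (div_le_one (by linarith [ht.1])).2 (by linarith [ht.1])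
    rw [Real.norm_of_nonneg hnonneg, Real.rpow_mul (abs_nonneg t)]
    exact modelSlopeInv_one_div_one_add_le (by linarith) ht.1 ht.2

lemma measure_restrict_setOf_lt_ne_zero {X : Type*} [TopologicalSpace X] [MeasurableSpace X]
    [OpensMeasurableSpace X] (ν : Measure X) [ν.IsOpenPosMeasure] {U : Set X} {w : X → ℝ} {x : X}
    {m : ℝ} (hU : IsOpen U) (hw : Continuous w) (hxU : x ∈ U) (hxm : w x < m) :
    ν.restrict U {y | w y < m} ≠ 0 := by
  have hopen : IsOpen {y | w y < m} := isOpen_lt hw continuous_const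
  rw [Measure.restrict_apply hopen.measurableSet]
  exact ((hopen.inter hU).measure_pos ν ⟨x, hxm, hxU⟩).ne'

/-- **Non-attainment in the one-dimensional counterexample.** For `μ ∈ (1,2)`, `α ∈ (0,1)`
with `μ > 1 + α`, the threshold `M₀ = ∫_{-1}^1 (μ(1 - 1/(1+|t|^α)))^{1/(1-μ)} dt` is finite,
and for every `M > M₀` the functional `𝒥[v] = ∫_{-1}^1 f(v(t))(1+|t|^α) dt` has no minimizer
among `v ∈ L¹((-1,1))` with `∫_{-1}^1 v = M`; equivalently, the variational problem
`∫_{-1}^1 f(u'(x))(1+|x|^α) dx` over `u ∈ W^{1,1}(-1,1)` with `u(-1) = 0`, `u(1) = M`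
(parametrized by `v = u'`) has no minimizer. -/
theorem no_minimizer_above_threshold (μ α : ℝ) (hμ : μ ∈ Set.Ioo (1:ℝ) 2)
    (hα : α ∈ Set.Ioo (0:ℝ) 1) (hμα : 1 + α < μ) (M : ℝ)
    (hM : (∫ t in Set.Ioo (-1:ℝ) 1, (μ * (1 - 1 / (1 + |t| ^ α))) ^ (1 / (1 - μ))) < M) :
    IntegrableOn (fun t : ℝ => (μ * (1 - 1 / (1 + |t| ^ α))) ^ (1 / (1 - μ)))
      (Set.Ioo (-1:ℝ) 1) ∧
    ¬ ∃ v : ℝ → ℝ, IntegrableOn v (Set.Ioo (-1:ℝ) 1) ∧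
        (∫ t in Set.Ioo (-1:ℝ) 1, v t) = M ∧
        ∀ v' : ℝ → ℝ, IntegrableOn v' (Set.Ioo (-1:ℝ) 1) →
          (∫ t in Set.Ioo (-1:ℝ) 1, v' t) = M →
          (∫ t in Set.Ioo (-1:ℝ) 1, modelF μ (v t) * (1 + |t| ^ α))
            ≤ ∫ t in Set.Ioo (-1:ℝ) 1, modelF μ (v' t) * (1 + |t| ^ α) := by
  have hμ2 : μ ≠ 2 := hμ.2.ne
  have hg := integrableOn_modelSlopeInv_one_div_one_add_abs_rpow hα.1.le hμα
  have hpow := ae_abs_rpow_mem_Ioc hα.1.le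
  have hcont : Continuous fun t : ℝ => 1 + |t| ^ α :=
    continuous_const.add (continuous_abs.rpow_const fun _ => Or.inr hα.1.le)
  refine ⟨hg, not_exists_isEnergyMinimizer_of_calibration (W := 2) (m := 1)
    (lipschitzWith_modelF hμ.1 hμ2) hcont.measurable (ae_of_all _ fun t => by positivity) ?_
    (fun ε hε => measure_restrict_setOf_lt_ne_zero volume (x := 0) isOpen_Ioo hcont (by norm_num)
      (by simpa [Real.zero_rpow hα.1.ne'] using hε)) hg ?_ hM⟩
  · filter_upwards [hpow] with t ht
    rw [Real.norm_of_nonneg (by positivity)]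
    linarith [ht.2]
  · filter_upwards [hpow] with t ht z hz
    have htwo_le : 2 ≤ μ / (μ - 1) := (le_div_iff₀ (by linarith [hμ.1])).2 (by linarith [hμ.2])
    simpa only [NNReal.coe_one, one_mul] using
      modelF_mul_add_sub_lt hμ.1 hμ2 (by linarith [ht.1]) (by linarith [ht.2]) hz
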